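/- arXiv:1707.00658 — 3 statements merged into one kernel-verified Lean document; each statement's English description precedes it below -/
import Mathlib

section
/- Let D be a division ring algebraic over its center F such that either char(D) ≠ 2 or dim_F D > 4. Then the additive commutator subgroup [D, D] (the additive group generated by all elements xy − yx) is contained in T(D). -/
open Polynomial

theorem aux_eigen {K V : Type*} [Field K] [Fintype K] [AddCommGroup V] [Module K V]
    (σ : Module.End K V) (h : σ ^ Fintype.card K = σ) (h1 : σ ≠ 1) :
    ∃ (c : K) (y : V), c ≠ 1 ∧ y ≠ 0 ∧ σ y = c • y := by
  classical
  by_contra! hcon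
  apply h1
  have hp : (X ^ Fintype.card K - X : K[X]) = ∏ c : K, (X - C c) := by
    have hr := FiniteField.roots_X_pow_card_sub_X K
    have hd := FiniteField.X_pow_card_sub_X_natDegree_eq K (Fintype.one_lt_card (α := K))
    have hm : (X ^ Fintype.card K - X : K[X]).Monic :=
      monic_X_pow_sub (by rw [degree_X]; exact_mod_cast Fintype.one_lt_card (α := K))
    have := prod_multiset_X_sub_C_of_monic_of_roots_card_eq hm (by rw [hr, hd]; rfl)
    rw [hr] at this
    exact this.symm
  have h0 : aeval σ (∏ c : K, (X - C c)) = 0 := by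
    rw [← hp]; simp [h]
  have hinj : ∀ s : Finset K, 1 ∉ s → Function.Injective (aeval σ (∏ c ∈ s, (X - C c))) := by
    intro s
    induction s using Finset.induction_on with
    | empty => intro _; simp only [Finset.prod_empty, map_one]; exact Function.injective_id
    | insert a s ha ih =>
      intro hs
      rw [Finset.prod_insert ha, map_mul, Module.End.mul_eq_comp, LinearMap.coe_comp]
      refine Function.Injective.comp ?_ (ih (fun h => hs (Finset.mem_insert_of_mem h)))
      rw [injective_iff_map_eq_zero]
      intro y hy
      by_contra hy0
      refine hcon a y (fun h => hs (by simp [h])) hy0 ?_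
      simpa [sub_eq_zero] using hy
  ext v
  have h2 := hinj (Finset.univ.erase 1) (by simp)
  rw [← Finset.prod_erase_mul _ _ (Finset.mem_univ (1 : K)), map_mul] at h0
  have h3 := LinearMap.congr_fun h0 v
  rw [Module.End.mul_apply, LinearMap.zero_apply, map_eq_zero_iff _ h2] at h3
  simpa [sub_eq_zero] using h3

theorem aux_one_mem {F D : Type*} [Field F] [Infinite F] [DivisionRing D] [Algebra F D] (a : D)
    (ha : IsIntegral F a) (hn : ∀ l : F, a + algebraMap F D l ≠ 0) :
    (1 : D) ∈ Submodule.span F (Set.range fun l : F => (a + algebraMap F D l)⁻¹) := by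
  classical
  set V := Submodule.span F (Set.range fun l : F => (a + algebraMap F D l)⁻¹) with hV
  have hle : V ≤ Subalgebra.toSubmodule (Algebra.adjoin F {a}) := by
    rw [hV, Submodule.span_le]
    rintro _ ⟨l, rfl⟩
    have hi : IsIntegral F (a + algebraMap F D l) := by
      refine .of_mem_of_fg _ ha.fg_adjoin_singleton _ ?_
      exact add_mem (Algebra.self_mem_adjoin_singleton F a) (Subalgebra.algebraMap_mem _ _)
    refine (Algebra.adjoin_le ?_ : Algebra.adjoin F {a + algebraMap F D l} ≤ _) hi.inv_mem_adjoin
    rintro _ rfl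
    exact add_mem (Algebra.self_mem_adjoin_singleton F a) (Subalgebra.algebraMap_mem _ _)
  have : FiniteDimensional F (Algebra.adjoin F {a}) := .of_fg ha.fg_adjoin_singleton
  have : FiniteDimensional F (Subalgebra.toSubmodule (Algebra.adjoin F {a})) := this
  have hfd : FiniteDimensional F V := Submodule.finiteDimensional_of_le hle
  have hfg : V.FG := Submodule.fg_iff_finiteDimensional _ |>.2 hfd
  obtain ⟨s, hs, hsV⟩ := (Submodule.fg_span_iff_fg_span_finset_subset _).1 hfg
  rw [← Set.image_univ] at hs
  obtain ⟨t, -, rfl⟩ := Finset.subset_set_image_iff.1 hs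
  obtain ⟨m, hm⟩ := Infinite.exists_notMem_finset t
  set b := (a + algebraMap F D m)⁻¹ with hb
  have hb0 : b ≠ 0 := inv_ne_zero (hn m)
  have hbV : b ∈ V := Submodule.subset_span ⟨m, rfl⟩
  have hmap : ∀ v ∈ V, b * v ∈ V := by
    intro v hv
    rw [hV, hsV] at hv
    induction hv using Submodule.span_induction with
    | mem x hx =>
      simp only [Finset.coe_image, Set.mem_image, Finset.mem_coe] at hx
      obtain ⟨l, hl, rfl⟩ := hx
      have hlm : l - m ≠ 0 := fun h => hm (by rwa [← sub_eq_zero.1 h])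
      have : b * (a + algebraMap F D l)⁻¹ = (l - m)⁻¹ • (b - (a + algebraMap F D l)⁻¹) := by
        rw [eq_inv_smul_iff₀ hlm, Algebra.smul_def, map_sub, ← mul_assoc,
          (Algebra.commutes (l) b : _) |> fun h => show (algebraMap F D l - algebraMap F D m) * b = b * (algebraMap F D l - algebraMap F D m) by
            rw [sub_mul, mul_sub, Algebra.commutes, Algebra.commutes]]
        have h1 : algebraMap F D l - algebraMap F D m = (a + algebraMap F D l) - (a + algebraMap F D m) := by abel
        rw [h1, mul_sub, sub_mul, hb, inv_mul_cancel₀ (hn m), mul_assoc, mul_inv_cancel₀ (hn l)]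
        simp
      rw [this]
      exact V.smul_mem _ (V.sub_mem hbV (Submodule.subset_span ⟨l, rfl⟩))
    | zero => simp
    | add x y _ _ hx hy => rw [mul_add]; exact V.add_mem hx hy
    | smul c x _ hx => rw [mul_smul_comm]; exact V.smul_mem _ hx
  let f : V →ₗ[F] V := (LinearMap.mulLeft F b).restrict hmap
  have hf : Function.Injective f := by
    rw [injective_iff_map_eq_zero]
    intro x hx
    have h0 : b * (x : D) = 0 := congrArg Subtype.val hx
    exact Subtype.ext ((mul_eq_zero.1 h0).resolve_left hb0)
  obtain ⟨v, hv⟩ := (LinearMap.injective_iff_surjective.1 hf) ⟨b, hbV⟩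
  have h1 : b * (v : D) = b := congrArg Subtype.val hv
  have h2 : (v : D) = 1 := mul_left_cancel₀ hb0 (by rw [h1, mul_one])
  rw [← h2]; exact v.2

theorem aux_fin_adjoin {F D : Type*} [Field F] [Finite F] [DivisionRing D] [Algebra F D] (x y : D)
    (hx : IsIntegral F x) (hy : IsIntegral F y) (hy0 : y ≠ 0)
    (h : y * x * y⁻¹ ∈ Algebra.adjoin F {x}) : x * y = y * x := by
  set K := Algebra.adjoin F {x} with hK
  set L := Algebra.adjoin F {y} with hL
  set M := Subalgebra.toSubmodule K * Subalgebra.toSubmodule L with hM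
  have hMfg : M.FG := hx.fg_adjoin_singleton.mul hy.fg_adjoin_singleton
  have hyL : y ∈ L := Algebra.self_mem_adjoin_singleton F y
  have hxK : x ∈ K := Algebra.self_mem_adjoin_singleton F x
  have hconj : ∀ k ∈ K, y * k * y⁻¹ ∈ K := by
    intro k hk
    induction hk using Algebra.adjoin_induction with
    | mem z hz => rw [Set.mem_singleton_iff] at hz; rwa [hz]
    | algebraMap r =>
      rw [← Algebra.commutes, mul_assoc, mul_inv_cancel₀ hy0, mul_one]
      exact Subalgebra.algebraMap_mem _ _
    | add p q _ _ hp hq => rw [mul_add, add_mul]; exact add_mem hp hq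
    | mul p q _ _ hp hq =>
      have : y * (p * q) * y⁻¹ = (y * p * y⁻¹) * (y * q * y⁻¹) := by
        simp [mul_assoc, hy0]
      rw [this]; exact mul_mem hp hq
  have hst : ∀ z ∈ Algebra.adjoin F {x, y}, ∀ m ∈ M, z * m ∈ M := by
    intro z hz
    induction hz using Algebra.adjoin_induction with
    | mem z hz =>
      intro m hm
      induction hm using Submodule.mul_induction_on' with
      | add p _ q _ hp hq => rw [mul_add]; exact add_mem hp hq
      | mem_mul_mem k hk l hl =>
        rcases hz with rfl | hz
        · rw [← mul_assoc]; exact Submodule.mul_mem_mul (K.mul_mem hxK hk) hl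
        · rw [Set.mem_singleton_iff] at hz
          subst hz
          have : z * (k * l) = (z * k * z⁻¹) * (z * l) := by simp [mul_assoc, hy0]
          rw [this]; exact Submodule.mul_mem_mul (hconj k hk) (L.mul_mem hyL hl)
    | algebraMap r => intro m hm; rw [← Algebra.smul_def]; exact M.smul_mem _ hm
    | add p q _ _ hp hq => intro m hm; rw [add_mul]; exact add_mem (hp m hm) (hq m hm)
    | mul p q _ _ hp hq => intro m hm; rw [mul_assoc]; exact hp _ (hq m hm)
  have h1M : (1 : D) ∈ M := by
    rw [← mul_one (1 : D)]; exact Submodule.mul_mem_mul (one_mem K) (one_mem L)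
  have hle : ∀ z ∈ Algebra.adjoin F {x, y}, z ∈ M := fun z hz => by simpa using hst z hz 1 h1M
  have : Module.Finite F M := Module.Finite.iff_fg.2 hMfg
  have : Finite M := Module.finite_of_finite F
  have : Finite (Algebra.adjoin F {x, y}) :=
    Finite.of_injective (fun z => (⟨z.1, hle z.1 z.2⟩ : M)) (fun a b hab => Subtype.ext (congrArg (fun m : M => (m : D)) hab))
  have hf := Finite.isDomain_to_isField (Algebra.adjoin F {x, y})
  exact congrArg Subtype.val (hf.mul_comm ⟨x, Algebra.subset_adjoin (by simp)⟩
    ⟨y, Algebra.subset_adjoin (by simp)⟩)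

theorem aux_eigen2 {K D : Type*} [Field K] [Fintype K] [DivisionRing D] (i : K →+* D) (x : K)
    (w : D) (hne : i x * w ≠ w * i x) :
    ∃ (c : K) (y : D), c ≠ 1 ∧ y ≠ 0 ∧ i x * y = i c * y * i x := by
  have hx0 : i x ≠ 0 := by intro h; simp [h] at hne
  let _ : Module K D := Module.compHom D i
  have hsm : ∀ (k : K) (d : D), k • d = i k * d := fun _ _ => rfl
  let σ : Module.End K D :=
    { toFun := fun d => i x * d * (i x)⁻¹
      map_add' := fun p q => by rw [mul_add, add_mul]
      map_smul' := fun k d => by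
        simp only [hsm, RingHom.id_apply]
        rw [← mul_assoc, ← map_mul, mul_comm x k, map_mul]; simp only [mul_assoc] }
  have hσ : ∀ d, σ d = i x * d * (i x)⁻¹ := fun _ => rfl
  have hpow : ∀ n d, (σ ^ n) d = i x ^ n * d * (i x ^ n)⁻¹ := by
    intro n
    induction n with
    | zero => intro d; simp
    | succ n ih =>
      intro d
      rw [pow_succ', Module.End.mul_apply, ih, hσ, pow_succ' (i x) n, mul_inv_rev]
      simp only [mul_assoc]
  have hxq : i x ^ Fintype.card K = i x := by rw [← map_pow, FiniteField.pow_card]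
  obtain ⟨c, y, hc, hy, hcy⟩ := aux_eigen σ (by ext d; rw [hpow, hxq, hσ]) (by
    intro h
    apply hne
    have := LinearMap.congr_fun h w
    rw [hσ, Module.End.one_apply, mul_inv_eq_iff_eq_mul₀ hx0] at this
    exact this)
  rw [hσ, hsm, mul_inv_eq_iff_eq_mul₀ hx0] at hcy
  exact ⟨c, y, hc, hy, hcy⟩

theorem aux_jacobson {F D : Type*} [Field F] [Finite F] [DivisionRing D] [Algebra F D]
    (hIntegral : ∀ a : D, IsIntegral F a) (x w : D) : x * w = w * x := by
  by_contra hne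
  have hx0 : x ≠ 0 := by rintro rfl; simp at hne
  let K := Algebra.adjoin F {x}
  have : Module.Finite F (Subalgebra.toSubmodule K) := Module.Finite.iff_fg.2 (hIntegral x).fg_adjoin_singleton
  have : Finite (Subalgebra.toSubmodule K) := Module.finite_of_finite F
  have : Finite K := this
  have := Fintype.ofFinite K
  have hxK : x ∈ K := Algebra.self_mem_adjoin_singleton F x
  let _ : Field K := (Finite.isDomain_to_isField K).toField
  obtain ⟨c, y, hc, hy, hcy⟩ := aux_eigen2 (K.val : K →+* D) ⟨x, hxK⟩ w hne
  change x * y = (c : D) * y * x at hcy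
  -- x * y = c * y * x
  have hc0 : c ≠ 0 := by
    rintro rfl
    simp [hx0, hy] at hcy
  have hcD : (c : D) ≠ 0 := fun h => hc0 (Subtype.ext h)
  have hci : (c : D) * ((c⁻¹ : K) : D) = 1 := congrArg Subtype.val (mul_inv_cancel₀ hc0)
  have hmem : y * x * y⁻¹ ∈ Algebra.adjoin F {x} := by
    have : y * x * y⁻¹ = ((c⁻¹ * ⟨x, hxK⟩ : K) : D) := by
      rw [mul_inv_eq_iff_eq_mul₀ hy]
      apply mul_left_cancel₀ hcD
      rw [← mul_assoc, ← hcy]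
      change _ = (c : D) * (((c⁻¹ : K) : D) * x * y)
      rw [← mul_assoc, ← mul_assoc, hci, one_mul]
    rw [this]; exact Subtype.prop _
  have hcomm := aux_fin_adjoin x y (hIntegral x) (hIntegral y) hy hmem
  apply hc
  apply Subtype.ext
  change (c : D) = 1
  rw [hcomm, mul_assoc] at hcy
  exact (mul_right_cancel₀ (mul_ne_zero hy hx0) (by rw [one_mul]; exact hcy)).symm

/-- If `D` is algebraic over its centre and either `char D ≠ 2` or `dim_F D > 4`, then the
additive commutator subgroup `[D,D]` is contained in `T(D)`. -/
theorem stmt_5 (D : Type*) [DivisionRing D]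
    (halg : ∀ a : D, IsAlgebraic (Subring.center D) a)
    (hnc : ∃ x y : D, x * y ≠ y * x)
    (hchar : ringChar D ≠ 2 ∨ 4 < Module.rank (Subring.center D) D)
    (T : Submodule (Subring.center D) D)
    (hT : T = Submodule.span (Subring.center D)
      {z : D | ∃ x y : D, x ≠ 0 ∧ y ≠ 0 ∧ z = x * y * x⁻¹ * y⁻¹}) :
    ∀ z ∈ AddSubgroup.closure {z : D | ∃ x y : D, z = x * y - y * x}, z ∈ T := by
  have hIntegral : ∀ a : D, IsIntegral (Subring.center D) a := fun a => (halg a).isIntegral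
  have hinf : Infinite (Subring.center D) := by
    by_contra h
    rw [not_infinite_iff_finite] at h
    obtain ⟨x, y, hxy⟩ := hnc
    exact hxy (aux_jacobson hIntegral x y)
  have hcom : ∀ x y : D, x ≠ 0 → y ≠ 0 → x * y * x⁻¹ * y⁻¹ ∈ T := fun x y hx hy => by
    rw [hT]; exact Submodule.subset_span ⟨x, y, hx, hy, rfl⟩
  have h1 : (1 : D) ∈ T := by simpa using hcom 1 1 one_ne_zero one_ne_zero
  -- key step
  have key : ∀ a u : D, u ≠ 0 → (a * u - u * a) * u⁻¹ ∈ T := by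
    intro a u hu
    by_cases hac : ∃ l : Subring.center D, a + algebraMap (Subring.center D) D l = 0
    · obtain ⟨l, hl⟩ := hac
      have : a * u - u * a = 0 := by
        rw [eq_neg_of_add_eq_zero_left hl, neg_mul, mul_neg, Algebra.commutes, sub_self]
      simp [this]
    push Not at hac
    have hone := aux_one_mem a (hIntegral a) hac
    have hall : ∀ v ∈ Submodule.span (Subring.center D) (Set.range fun l : Subring.center D =>
        (a + algebraMap (Subring.center D) D l)⁻¹), (a * u - u * a) * v * u⁻¹ ∈ T := by
      intro v hv
      induction hv using Submodule.span_induction with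
      | mem x hx =>
        obtain ⟨l, rfl⟩ := hx
        have h2 := T.sub_mem (hcom _ u (hac l) hu) h1
        convert h2 using 1
        set b := a + algebraMap (Subring.center D) D l with hb
        have : a * u - u * a = b * u - u * b := by
          rw [hb, add_mul, mul_add, Algebra.commutes]; abel
        simp only
        rw [this, sub_mul, sub_mul, mul_assoc u b, mul_inv_cancel₀ (hac l), mul_one,
          mul_inv_cancel₀ hu]
      | zero => simp
      | add x y _ _ hx hy => rw [mul_add, add_mul]; exact T.add_mem hx hy
      | smul c x _ hx => rw [mul_smul_comm, smul_mul_assoc]; exact T.smul_mem _ hx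
    simpa using hall 1 hone
  intro z hz
  induction hz using AddSubgroup.closure_induction with
  | mem z hz =>
    obtain ⟨x, y, rfl⟩ := hz
    by_cases hy : y = 0
    · simp [hy]
    have := key (x * y) y hy
    have h2 : (x * y * y - y * (x * y)) * y⁻¹ = x * y - y * x := by
      rw [sub_mul, mul_assoc _ y, mul_inv_cancel₀ hy, mul_one, mul_assoc y, mul_assoc x,
        mul_inv_cancel₀ hy, mul_one]
    rwa [h2] at this
  | zero => exact T.zero_mem
  | add x y _ _ hx hy => exact T.add_mem hx hy
  | neg x _ hx => exact T.neg_mem hx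
end

section
/- Let D be a division ring of dimension n² over its center F. Then the F-vector subspace of D spanned by the additive commutators [D,D] has dimension n² − 1 over F; in particular [D,D] is a hyperplane of D. -/
section Helpers

variable {K D ι : Type*} [Field K] [DivisionRing D] [Algebra K D]

theorem aux_right (hc : ∀ z : D, (∀ y, z * y = y * z) → ∃ c : K, algebraMap K D c = z)
    (e : ι → D) (he : LinearIndependent K e) (s : Finset ι) :
    ∀ a : ι → D, (∀ x, ∑ i ∈ s, a i * x * e i = 0) → ∀ i ∈ s, a i = 0 := by
  classical
  induction s using Finset.induction_on with
  | empty => simp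
  | insert j s hj ih =>
    intro a h
    by_cases haj : a j = 0
    · intro i hi
      rcases Finset.mem_insert.1 hi with rfl | hi
      · exact haj
      · refine ih a (fun x => ?_) i hi
        have := h x
        rwa [Finset.sum_insert hj, haj, zero_mul, zero_mul, zero_add] at this
    · exfalso
      set b : ι → D := fun i => (a j)⁻¹ * a i with hb
      have hbj : b j = 1 := by simp [hb, haj]
      have h1 : ∀ x, ∑ i ∈ insert j s, b i * x * e i = 0 := by
        intro x
        have := congrArg (fun t => (a j)⁻¹ * t) (h x)
        simpa [Finset.mul_sum, hb, mul_assoc] using this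
      have h2 : ∀ y, ∀ i ∈ s, b i * y - y * b i = 0 := by
        intro y
        refine ih (fun i => b i * y - y * b i) (fun x => ?_)
        have e1 := h1 (y * x)
        have e2 := congrArg (fun t => y * t) (h1 x)
        simp only [Finset.mul_sum, mul_zero] at e2
        have e3 : ∑ i ∈ insert j s, (b i * y - y * b i) * x * e i = 0 := by
          rw [← sub_eq_zero.2 (e1.trans e2.symm), ← Finset.sum_sub_distrib]
          refine Finset.sum_congr rfl fun i _ => ?_
          noncomm_ring
        rw [Finset.sum_insert hj, hbj] at e3
        simpa using e3
      have h3 : ∀ i ∈ insert j s, ∃ c : K, algebraMap K D c = b i := by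
        intro i hi
        rcases Finset.mem_insert.1 hi with rfl | hi
        · exact ⟨1, by simp [hbj]⟩
        · exact hc _ fun y => sub_eq_zero.1 (h2 y i hi)
      choose! c hcb using h3
      have h4 : ∑ i ∈ insert j s, c i • e i = 0 := by
        rw [← h1 1]
        refine Finset.sum_congr rfl fun i hi => ?_
        rw [Algebra.smul_def, hcb i hi, mul_one]
      have h5 := linearIndependent_iff'.1 he _ c h4 j (Finset.mem_insert_self _ _)
      have h6 := hcb j (Finset.mem_insert_self _ _)
      rw [h5, map_zero, hbj] at h6
      exact zero_ne_one h6

theorem aux_main [Module.Finite K D]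
    (hc : ∀ z : D, (∀ y, z * y = y * z) → ∃ c : K, algebraMap K D c = z) :
    Submodule.span K {z : D | ∃ x y : D, z = x * y - y * x} ≠ ⊤ := by
  classical
  intro htop
  let e := Module.finBasis K D
  let Φ : (Fin (Module.finrank K D) → D) →ₗ[K] Module.End K D :=
    { toFun := fun a => ∑ i, LinearMap.mulLeftRight K (a i, e i)
      map_add' := by
        intro a b; ext x
        simp [add_mul, Finset.sum_add_distrib]
      map_smul' := by
        intro r a; ext x
        simp [Finset.smul_sum] }
  have hΦ : ∀ a x, Φ a x = ∑ i, a i * x * e i := by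
    intro a x; simp [Φ]
  have hinj : Function.Injective Φ := by
    rw [injective_iff_map_eq_zero]
    intro a ha
    funext i
    refine aux_right hc e e.linearIndependent Finset.univ a (fun x => ?_) i (Finset.mem_univ i)
    rw [← hΦ, ha]; rfl
  have hsurj : Function.Surjective Φ := by
    refine (LinearMap.injective_iff_surjective_of_finrank_eq_finrank ?_).1 hinj
    rw [Module.finrank_pi_fintype, Module.finrank_linearMap]
    simp
  obtain ⟨g, hg⟩ : ∃ g : Module.Dual K D, g 1 ≠ 0 := by
    by_contra! h
    exact one_ne_zero ((Module.forall_dual_apply_eq_zero_iff K (1 : D)).1 h)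
  obtain ⟨a, ha⟩ := hsurj (LinearMap.toSpanSingleton K D 1 ∘ₗ g)
  have hax : ∀ x, ∑ i, a i * x * e i = algebraMap K D (g x) := by
    intro x
    rw [← hΦ, ha]; simp [Algebra.algebraMap_eq_smul_one]
  -- coefficients of right multiplication
  have hrep : ∀ i y, e i * y = ∑ j, e.repr (e i * y) j • e j := fun i y => (e.sum_repr _).symm
  have hya : ∀ y j, y * a j = ∑ i, e.repr (e i * y) j • a i := by
    intro y j
    have hz : Φ (fun j => y * a j) = Φ (fun j => ∑ i, e.repr (e i * y) j • a i) := by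
      ext x
      rw [hΦ, hΦ]
      have l : ∑ j, y * a j * x * e j = y * algebraMap K D (g x) := by
        rw [← hax, Finset.mul_sum]; simp only [mul_assoc]
      have r : ∑ j, (∑ i, e.repr (e i * y) j • a i) * x * e j = algebraMap K D (g x) * y := by
        rw [← hax, Finset.sum_mul]
        simp only [Finset.sum_mul]
        rw [Finset.sum_comm]
        refine Finset.sum_congr rfl fun i _ => ?_
        rw [mul_assoc (a i * x), hrep i y, Finset.mul_sum]
        simp only [← hrep]
        refine Finset.sum_congr rfl fun j _ => ?_
        simp
      rw [l, r, Algebra.commutes]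
    exact congrFun (hinj hz) j
  have htr : ∀ x y, ∑ i, e i * (x * y) * a i = ∑ i, e i * (y * x) * a i := by
    intro x y
    calc ∑ j, e j * (x * y) * a j = ∑ j, ∑ i, e.repr (e i * y) j • (e j * x * a i) := by
          refine Finset.sum_congr rfl fun j _ => ?_
          rw [← mul_assoc, mul_assoc (e j * x), hya, Finset.mul_sum]
          simp
      _ = ∑ i, e i * (y * x) * a i := by
          rw [Finset.sum_comm]
          refine Finset.sum_congr rfl fun i _ => ?_
          rw [← mul_assoc, hrep i y, Finset.sum_mul, Finset.sum_mul]
          simp only [← hrep]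
          simp
  let S : D →ₗ[K] D := ∑ i, LinearMap.mulLeftRight K (e i, a i)
  have hS : ∀ x, S x = ∑ i, e i * x * a i := by intro x; simp [S]
  have hS0 : ∀ x, S x = 0 := by
    have : Submodule.span K {z : D | ∃ x y : D, z = x * y - y * x} ≤ LinearMap.ker S := by
      rw [Submodule.span_le]
      rintro _ ⟨x, y, rfl⟩
      simp only [SetLike.mem_coe, LinearMap.mem_ker, map_sub]
      rw [hS, hS, htr, sub_self]
    rw [htop] at this
    exact fun x => this Submodule.mem_top
  have hm : ∀ k, ∑ i, e.repr (a i) k • e i = 0 := by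
    have : Φ (fun k => ∑ i, e.repr (a i) k • e i) = 0 := by
      ext x
      rw [hΦ, LinearMap.zero_apply, ← hS0 x, hS]
      simp only [Finset.sum_mul]
      rw [Finset.sum_comm]
      refine Finset.sum_congr rfl fun i _ => ?_
      conv_rhs => rw [← e.sum_repr (a i), Finset.mul_sum]
      simp
    rw [← map_zero Φ] at this
    exact fun k => congrFun (hinj this) k
  have ha0 : ∀ i, a i = 0 := by
    intro i
    apply e.repr.injective
    ext k
    simpa using Fintype.linearIndependent_iff.1 e.linearIndependent _ (hm k) i
  have := hax 1
  simp [ha0] at this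
  exact hg ((map_eq_zero (algebraMap K D)).1 this.symm)

theorem aux_finrank [Module.Finite K D]
    (hc : ∀ z : D, (∀ y, z * y = y * z) → ∃ c : K, algebraMap K D c = z) :
    Module.finrank K (Submodule.span K {z : D | ∃ x y : D, z = x * y - y * x})
      = Module.finrank K D - 1 := by
  set W := Submodule.span K {z : D | ∃ x y : D, z = x * y - y * x} with hW
  obtain ⟨f, hf0, hfW⟩ := Submodule.exists_le_ker_of_lt_top W (lt_top_iff_ne_top.2 (aux_main hc))
  have htr : ∀ h : Module.Dual K D, W ≤ LinearMap.ker h → ∀ x y, h (x * y) = h (y * x) := by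
    intro h hh x y
    have : x * y - y * x ∈ LinearMap.ker h := hh (Submodule.subset_span ⟨x, y, rfl⟩)
    rw [LinearMap.mem_ker, map_sub, sub_eq_zero] at this
    exact this
  obtain ⟨d, hd⟩ : ∃ d, f d ≠ 0 := by
    by_contra! h
    exact hf0 (LinearMap.ext h)
  have hnd : ∀ a, (∀ x, f (a * x) = 0) → a = 0 := by
    intro a h
    by_contra ha
    apply hd
    have := h (a⁻¹ * d)
    rwa [mul_inv_cancel_left₀ ha] at this
  let ψ : D →ₗ[K] Module.Dual K D := (LinearMap.mul K D).compr₂ f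
  have hψ : ∀ a x, ψ a x = f (a * x) := fun a x => rfl
  have hψi : Function.Injective ψ := by
    rw [injective_iff_map_eq_zero]
    intro a h
    exact hnd a fun x => by rw [← hψ, h]; rfl
  have hψs : Function.Surjective ψ :=
    (LinearMap.injective_iff_surjective_of_finrank_eq_finrank
      Subspace.dual_finrank_eq.symm).1 hψi
  have hmem : ∀ h : Module.Dual K D, h ∈ W.dualAnnihilator ↔ W ≤ LinearMap.ker h := by
    intro h
    rw [Submodule.mem_dualAnnihilator]
    rfl
  have h1 : Module.finrank K W.dualAnnihilator = 1 := by
    haveI : Module.Free K W.dualAnnihilator := Module.Free.of_divisionRing K W.dualAnnihilator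
    refine (finrank_eq_one_iff' (K := K) (V := W.dualAnnihilator)).2 ⟨⟨f, (hmem f).2 hfW⟩, fun h => hf0 (congrArg Subtype.val h), ?_⟩
    rintro ⟨h, hh⟩
    obtain ⟨a, rfl⟩ := hψs h
    have t := htr _ ((hmem _).1 hh)
    have tf := htr f hfW
    obtain ⟨c, rfl⟩ := hc a (by
      intro x
      rw [← sub_eq_zero]
      apply hnd
      intro y
      have := t x y
      rw [hψ, hψ] at this
      rw [sub_mul, map_sub, sub_eq_zero, mul_assoc, this, ← mul_assoc, tf, mul_assoc])
    refine ⟨c, Subtype.ext (LinearMap.ext fun x => ?_)⟩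
    show c • f x = ψ _ x
    rw [hψ, ← Algebra.smul_def, map_smul]
  have h2 := Subspace.finrank_add_finrank_dualAnnihilator_eq W
  omega

end Helpers

/-- If `dim_F D = n²`, then the span of additive commutators has dimension `n² - 1`. -/
theorem stmt_8 (D : Type*) [DivisionRing D] (n : ℕ) (hn : 1 ≤ n)
    [Module.Finite (Subring.center D) D]
    (hdim : Module.finrank (Subring.center D) D = n ^ 2) :
    Module.finrank (Subring.center D)
      (Submodule.span (Subring.center D) {z : D | ∃ x y : D, z = x * y - y * x})
      = n ^ 2 - 1 := by
  rw [← hdim]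
  exact aux_finrank (K := Subring.center D) (fun z hz =>
    ⟨⟨z, Subring.mem_center_iff.2 fun y => (hz y).symm⟩, rfl⟩)
end

section
/- Let D be a division ring with center F, and suppose every element of T(D) is radical over F (i.e., for each t ∈ T(D) there exists n ≥ 1 with tⁿ ∈ F). Then D = F. -/
namespace RadT

open Polynomial

/-- Equal powers of translates force algebraicity over the base field. -/
lemma alg_of_pow_eq {k Ω : Type*} [Field k] [Field Ω] [Algebra k Ω] {c c' : Ω} (hc : c ≠ c')
    (S : Set Ω) (h0 : 0 ∈ S) (h1 : 1 ∈ S)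
    (h : ∀ a ∈ S, ∃ n : ℕ, 0 < n ∧ (c + a) ^ n = (c' + a) ^ n) :
    (IsAlgebraic k c ∧ IsAlgebraic k c') ∧ ∀ a ∈ S, IsAlgebraic k a := by
  have key : ∀ a ∈ S, ∃ z : Ω, IsAlgebraic k z ∧ z ≠ 1 ∧ c' + a = z * (c + a) := by
    intro a ha
    obtain ⟨n, hn, e⟩ := h a ha
    have hne : c + a ≠ 0 := by
      intro h0
      rw [h0, zero_pow hn.ne'] at e
      have := pow_eq_zero_iff hn.ne' |>.1 e.symm
      exact hc (by linear_combination h0 - this)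
    refine ⟨(c' + a) / (c + a), ?_, ?_, by field_simp⟩
    · refine ⟨X ^ n - 1, X_pow_sub_C_ne_zero hn 1, ?_⟩
      simp only [map_sub, map_pow, aeval_X, map_one, div_pow, e]
      rw [div_self, sub_self]
      rw [← e]; exact pow_ne_zero _ hne
    · intro h1
      rw [div_eq_one_iff_eq hne] at h1
      exact hc (by linear_combination -h1)
  obtain ⟨z0, a0, n0, e0⟩ := key 0 h0
  obtain ⟨z1, a1, n1, e1⟩ := key 1 h1
  have hz : z0 - z1 ≠ 0 := by
    intro hz
    apply n1
    have : z0 = z1 := by linear_combination hz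
    subst this
    linear_combination e0 - e1
  have hcc : c = (z1 - 1) * (z0 - z1)⁻¹ := by
    field_simp
    linear_combination e1 - e0
  have one : IsAlgebraic k (1 : Ω) := isAlgebraic_one
  have ac : IsAlgebraic k c := by
    rw [hcc]; exact (a1.sub one).mul (a0.sub a1).inv
  have ac' : IsAlgebraic k c' := by
    have : c' = z0 * c := by linear_combination e0
    rw [this]; exact a0.mul ac
  refine ⟨⟨ac, ac'⟩, fun a ha => ?_⟩
  obtain ⟨z, az, nz, e⟩ := key a ha
  have : 1 - z ≠ 0 := fun h => nz (by linear_combination -h)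
  have : a = (z * c - c') * (1 - z)⁻¹ := by
    field_simp
    linear_combination e
  rw [this]
  exact ((az.mul ac).sub ac').mul (one.sub az).inv

lemma no_char_zero {Ω : Type*} [Field Ω] [CharZero Ω] {c c' : Ω} (hc : c ≠ c')
    (h : ∀ a : ℕ, ∃ n : ℕ, 0 < n ∧ (c + a) ^ n = (c' + a) ^ n) : False := by
  have := alg_of_pow_eq (k := ℚ) hc (Set.range (fun n : ℕ => (n : Ω))) ⟨0, by simp⟩ ⟨1, by simp⟩
    (by rintro _ ⟨a, rfl⟩; exact h a)
  obtain ⟨⟨ac, ac'⟩, -⟩ := this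
  let M := IntermediateField.adjoin ℚ ({c, c'} : Set Ω)
  have hfd : FiniteDimensional ℚ M :=
    IntermediateField.finiteDimensional_adjoin (by
      rintro x (rfl | rfl)
      · exact ac.isIntegral
      · exact ac'.isIntegral)
  have : NumberField M := { to_charZero := inferInstance, to_finiteDimensional := hfd }
  let d : M := ⟨c, IntermediateField.subset_adjoin _ _ (by simp)⟩
  let d' : M := ⟨c', IntermediateField.subset_adjoin _ _ (by simp)⟩
  have hd : d ≠ d' := fun h => hc (congrArg Subtype.val h)
  have h' : ∀ a : ℕ, ∃ n : ℕ, 0 < n ∧ (d + a) ^ n = (d' + a) ^ n := by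
    intro a
    obtain ⟨n, hn, e⟩ := h a
    exact ⟨n, hn, Subtype.ext (by simpa [d, d'] using e)⟩
  have hne : ∀ a : ℕ, d + a ≠ 0 := by
    intro a h0
    obtain ⟨n, hn, e⟩ := h' a
    rw [h0, zero_pow hn.ne'] at e
    have := pow_eq_zero_iff hn.ne' |>.1 e.symm
    exact hd (by linear_combination h0 - this)
  have hfin := NumberField.Embeddings.finite_of_norm_le M ℂ 1
  refine Set.infinite_of_injective_forall_mem (f := fun a : ℕ => (d' + a) / (d + a)) ?_ ?_ hfin
  · intro a b hab
    simp only at hab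
    rw [div_eq_div_iff (hne a) (hne b)] at hab
    have : (d - d') * ((a : M) - b) = 0 := by linear_combination hab
    rcases mul_eq_zero.1 this with h | h
    · exact absurd (sub_eq_zero.1 h) hd
    · exact_mod_cast sub_eq_zero.1 h
  · intro a
    obtain ⟨n, hn, e⟩ := h' a
    have h1 : ((d' + a) / (d + a)) ^ n = 1 := by
      rw [div_pow, e, div_self]
      rw [← e]; exact pow_ne_zero _ (hne a)
    refine ⟨?_, fun φ => ?_⟩
    · exact IsIntegral.of_pow hn (by rw [h1]; exact isIntegral_one)
    · have : (φ ((d' + a) / (d + a))) ^ n = 1 := by rw [← map_pow, h1, map_one]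
      exact (Complex.norm_eq_one_of_pow_eq_one this hn.ne').le

lemma prod_X_sub_C_univ (K : Type*) [Field K] [Fintype K] :
    (∏ k : K, (X - C k)) = (X ^ Fintype.card K - X : K[X]) := by
  have hr := FiniteField.roots_X_pow_card_sub_X K
  have hd := FiniteField.X_pow_card_sub_X_natDegree_eq K (Fintype.one_lt_card (α := K))
  have hm : (X ^ Fintype.card K - X : K[X]).Monic := by
    apply monic_X_pow_sub
    rw [degree_X]
    exact_mod_cast Fintype.one_lt_card (α := K)
  have := prod_multiset_X_sub_C_of_monic_of_roots_card_eq hm (by rw [hr, hd]; rfl)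
  rw [hr] at this
  exact this

/-- Eigenvalue lemma. -/
lemma exists_eigen {K D : Type*} [Field K] [Finite K] [DivisionRing D] (f : K →+* D) (α : K)
    (hα : f α ∉ Subring.center D) :
    ∃ (k : K) (y : D), k ≠ α ∧ y ≠ 0 ∧ y * f α = f k * y := by
  classical
  cases nonempty_fintype K
  let _ : Module K D := Module.compHom D f
  have smul_def : ∀ (k : K) (x : D), k • x = f k * x := fun _ _ => rfl
  let R : Module.End K D :=
    { toFun := fun x => x * f α
      map_add' := fun x y => add_mul _ _ _
      map_smul' := fun k x => by simp [smul_def, mul_assoc] }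
  have hR : ∀ x, R x = x * f α := fun _ => rfl
  have hRn : ∀ (n : ℕ) x, (R ^ n) x = x * f α ^ n := by
    intro n
    induction n with
    | zero => intro x; simp
    | succ n ih => intro x; rw [pow_succ, Module.End.mul_apply, ih, hR, pow_succ', mul_assoc]
  by_contra! hcon
  have hinj : ∀ k : K, k ≠ α → ∀ x, aeval R (X - C k) x = 0 → x = 0 := by
    intro k hk x hx
    by_contra hx0
    apply hcon k x hk hx0
    simp [smul_def, hR] at hx
    exact sub_eq_zero.1 hx
  have hprod : ∀ s : Finset K, α ∉ s → ∀ x, aeval R (∏ k ∈ s, (X - C k)) x = 0 → x = 0 := by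
    intro s
    induction s using Finset.induction_on with
    | empty => intro _ x hx; simpa using hx
    | insert k s hk ih =>
      intro hs x hx
      rw [Finset.prod_insert hk, map_mul, Module.End.mul_apply] at hx
      simp only [Finset.mem_insert, not_or] at hs
      exact ih hs.2 x (hinj k (Ne.symm hs.1) _ hx)
  apply hα
  rw [Subring.mem_center_iff]
  intro g
  have h0 : aeval R (∏ k : K, (X - C k)) = 0 := by
    rw [prod_X_sub_C_univ]
    ext x
    rw [map_sub, map_pow, aeval_X, LinearMap.sub_apply, hRn, hR, ← map_pow, FiniteField.pow_card]
    simp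
  rw [← Finset.prod_erase_mul _ _ (Finset.mem_univ α), map_mul] at h0
  have := hprod _ (Finset.notMem_erase α _) (aeval R (X - C α) g)
    (by rw [← Module.End.mul_apply, h0]; rfl)
  simp [smul_def, hR] at this
  exact sub_eq_zero.1 this


lemma caseK {K D : Type*} [Field K] [Finite K] [DivisionRing D] (f : K →+* D) (α : K)
    (hgen : Subring.closure {α} = ⊤) (hα : f α ∉ Subring.center D)
    (h : ∀ x : D, x ≠ 0 → x⁻¹ * f α * x - f α ≠ 0 →
      ∃ n : ℕ, 0 < n ∧ (x⁻¹ * f α * x - f α) ^ n = 1) : False := by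
  obtain ⟨k, y, hk, hy, e⟩ := exists_eigen f α hα
  let _ : Module K D := Module.compHom D f
  have smul_def : ∀ (k : K) (x : D), k • x = f k * x := fun _ _ => rfl
  have hkα : f (k - α) ≠ 0 := by
    rw [Ne, map_eq_zero]; exact sub_ne_zero.2 hk
  have hcomm : ∀ b : K, ∃ b' : K, y * f b = f b' * y := by
    intro b
    have hb : b ∈ Subring.closure {α} := by rw [hgen]; trivial
    induction hb using Subring.closure_induction with
    | mem x hx => rw [Set.mem_singleton_iff.1 hx]; exact ⟨k, e⟩
    | zero => exact ⟨0, by simp⟩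
    | one => exact ⟨1, by simp⟩
    | add x z _ _ hx hz =>
      obtain ⟨x', hx⟩ := hx
      obtain ⟨z', hz⟩ := hz
      exact ⟨x' + z', by rw [map_add, mul_add, hx, hz, map_add, add_mul]⟩
    | neg x _ hx =>
      obtain ⟨x', hx⟩ := hx
      exact ⟨-x', by rw [map_neg, mul_neg, hx, map_neg, neg_mul]⟩
    | mul x z _ _ hx hz =>
      obtain ⟨x', hx⟩ := hx
      obtain ⟨z', hz⟩ := hz
      exact ⟨x' * z', by rw [map_mul, ← mul_assoc, hx, mul_assoc, hz, map_mul, mul_assoc]⟩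
  have hnc : y * f α ≠ f α * y := by
    intro h0
    rw [e] at h0
    exact hk (f.injective (mul_right_cancel₀ hy h0))
  have h1y : 1 + y⁻¹ ≠ 0 := by
    intro h0
    have : y = -1 := by
      have : y⁻¹ = -1 := (neg_eq_of_add_eq_zero_right h0).symm
      rw [← inv_inv y, this, inv_neg, inv_one]
    exact hnc (by simp [this])
  set t := (1 + y⁻¹)⁻¹ * f α * (1 + y⁻¹) - f α with ht
  have e2 : f α * y⁻¹ = y⁻¹ * f k := by
    rw [eq_inv_mul_iff_mul_eq₀ hy, ← mul_assoc, e, mul_assoc, mul_inv_cancel₀ hy, mul_one]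
  have e3 : (1 + y⁻¹) * t = y⁻¹ * f (k - α) := by
    rw [ht, mul_sub, mul_assoc, mul_inv_cancel_left₀ h1y, map_sub, mul_sub, ← e2]
    noncomm_ring
  set d : K := (k - α)⁻¹ with hd
  have e4 : t * (f d * (1 + y)) = 1 := by
    have : t = (1 + y⁻¹)⁻¹ * (y⁻¹ * f (k - α)) := by rw [← e3, inv_mul_cancel_left₀ h1y]
    rw [this, hd, map_inv₀, mul_assoc, mul_assoc, mul_inv_cancel_left₀ hkα, mul_add, mul_one,
      inv_mul_cancel₀ hy, add_comm y⁻¹ 1, inv_mul_cancel₀ h1y]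
  have ht0 : t ≠ 0 := left_ne_zero_of_mul_eq_one e4
  obtain ⟨n, hn, htn⟩ := h _ h1y ht0
  have e5 : (f d * (1 + y)) ^ n = 1 := by
    rw [eq_inv_of_mul_eq_one_right e4, inv_pow, htn, inv_one]
  let M : ℕ → Submodule K D := fun n => Submodule.span K ((fun j => y ^ j) '' Set.Iio n)
  have hMmono : ∀ n, M n ≤ M (n + 1) := fun n =>
    Submodule.span_mono (Set.image_mono (Set.Iio_subset_Iio (Nat.le_succ n)))
  have hpow : ∀ n j, j < n → y ^ j ∈ M n := fun n j hj =>
    Submodule.subset_span ⟨j, hj, rfl⟩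
  have hfM : ∀ n (b : K) m, m ∈ M n → f b * m ∈ M n := fun n b m hm =>
    (M n).smul_mem b hm
  have hyM' : ∀ (n : ℕ) (N : Submodule K D), (∀ j, j < n → y ^ (j + 1) ∈ N) →
      ∀ m ∈ M n, y * m ∈ N := by
    intro n N hN m hm
    induction hm using Submodule.span_induction with
    | mem x hx =>
      obtain ⟨j, hj, rfl⟩ := hx
      simp only [← pow_succ']
      exact hN j hj
    | zero => rw [mul_zero]; exact N.zero_mem
    | add x z _ _ hx hz => rw [mul_add]; exact N.add_mem hx hz
    | smul b x _ hx =>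
      obtain ⟨b', hb⟩ := hcomm b
      rw [smul_def, ← mul_assoc, hb, mul_assoc]
      exact N.smul_mem b' hx
  have hyM : ∀ n, ∀ m ∈ M n, y * m ∈ M (n + 1) := fun n =>
    hyM' n _ fun j hj => hpow _ _ (Nat.succ_lt_succ hj)
  have hd0 : d ≠ 0 := inv_ne_zero (sub_ne_zero.2 hk)
  have hlead : ∀ n, ∃ b : K, b ≠ 0 ∧ (f d * (1 + y)) ^ n - f b * y ^ n ∈ M n := by
    intro n
    induction n with
    | zero => exact ⟨1, one_ne_zero, by simp⟩
    | succ n ih =>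
      obtain ⟨b, hb, hm⟩ := ih
      obtain ⟨b', hb'⟩ := hcomm b
      refine ⟨d * b', mul_ne_zero hd0 ?_, ?_⟩
      · rintro rfl
        rw [map_zero, zero_mul] at hb'
        rcases mul_eq_zero.1 hb' with h | h
        · exact hy h
        · exact hb ((map_eq_zero f).1 h)
      · set m := (f d * (1 + y)) ^ n - f b * y ^ n with hm'
        have : (f d * (1 + y)) ^ n = m + f b * y ^ n := by rw [hm']; abel
        have : (f d * (1 + y)) ^ (n + 1) - f (d * b') * y ^ (n + 1) =
            f d * m + f d * (y * m) + f (d * b) * y ^ n := by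
          have h2 : f d * (y * (f b * y ^ n)) = f (d * b') * y ^ (n + 1) := by
            rw [← mul_assoc y, hb', map_mul, pow_succ']
            simp only [mul_assoc]
          rw [pow_succ', this, ← h2, map_mul]
          noncomm_ring
        rw [this]
        exact add_mem (add_mem (hMmono n (hfM _ _ _ hm)) (hfM _ _ _ (hyM n m hm)))
          (hfM _ _ _ (hpow _ _ (Nat.lt_succ_self n)))
  have h1M : (1 : D) ∈ M n := by simpa using hpow n 0 hn
  have hynM : y ^ n ∈ M n := by
    obtain ⟨b, hb, hm⟩ := hlead n
    rw [e5] at hm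
    have := hfM n b⁻¹ _ (sub_mem h1M hm)
    rwa [sub_sub_cancel, map_inv₀, inv_mul_cancel_left₀ (by rwa [Ne, map_eq_zero])] at this
  have hyMn : ∀ m ∈ M n, y * m ∈ M n := hyM' n _ fun j hj => by
    rcases Nat.lt_or_ge (j + 1) n with h | h
    · exact hpow _ _ h
    · have : j + 1 = n := by omega
      rw [this]; exact hynM
  have hfinM : Finite (M n) := by
    have : Module.Finite K (M n) :=
      Module.Finite.span_of_finite K ((Set.finite_Iio n).image _)
    exact Module.finite_of_finite K
  let R : Subring D :=
    { carrier := {r | ∀ m ∈ M n, r * m ∈ M n}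
      mul_mem' := fun {a b} ha hb m hm => by rw [mul_assoc]; exact ha _ (hb _ hm)
      one_mem' := fun m hm => by rwa [one_mul]
      add_mem' := fun {a b} ha hb m hm => by rw [add_mul]; exact add_mem (ha _ hm) (hb _ hm)
      zero_mem' := fun m hm => by rw [zero_mul]; exact zero_mem _
      neg_mem' := fun {a} ha m hm => by rw [neg_mul]; exact neg_mem (ha _ hm) }
  have hfinR : Finite R := by
    refine Finite.of_injective (β := M n) (fun r => ⟨r.1, by simpa using r.2 1 h1M⟩) ?_
    intro a b hab
    exact Subtype.ext (congrArg (fun z : M n => (z : D)) hab)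
  have hF := Finite.isDomain_to_isField R
  have := hF.mul_comm ⟨y, hyMn⟩ ⟨f α, hfM n α⟩
  exact hnc (congrArg Subtype.val this)

lemma finite_closure {D : Type*} [DivisionRing D] (p : ℕ) [Fact p.Prime] [Algebra (ZMod p) D]
    (a : D) (ha : IsIntegral (ZMod p) a) : Finite (Subring.closure {a}) := by
  have h1 := ha.fg_adjoin_singleton
  have h2 : Module.Finite (ZMod p) (Algebra.adjoin (ZMod p) {a}) := Module.Finite.of_fg h1
  have h3 : Finite (Algebra.adjoin (ZMod p) {a}) := Module.finite_of_finite (ZMod p)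
  have h4 : Subring.closure {a} ≤ (Algebra.adjoin (ZMod p) {a}).toSubring := by
    rw [Subring.closure_le]
    exact Algebra.subset_adjoin
  exact Finite.of_injective (Subring.inclusion h4) (Subring.inclusion_injective h4)

lemma finite_order {D : Type*} [DivisionRing D] (p : ℕ) [Fact p.Prime] [Algebra (ZMod p) D]
    (a : D) (ha : IsIntegral (ZMod p) a) (h0 : a ≠ 0) : ∃ n : ℕ, 0 < n ∧ a ^ n = 1 := by
  have := finite_closure p a ha
  obtain ⟨i, j, hij, e⟩ := Finite.exists_ne_map_eq_of_infinite
    (fun n : ℕ => (⟨a, Subring.subset_closure rfl⟩ : Subring.closure {a}) ^ n)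
  replace e : a ^ i = a ^ j := congrArg Subtype.val e
  wlog hlt : i < j generalizing i j
  · exact this j i hij.symm e.symm (by omega)
  refine ⟨j - i, by omega, ?_⟩
  have : a ^ i * a ^ (j - i) = a ^ i * 1 := by
    rw [← pow_add, mul_one, e]; congr 1; omega
  exact mul_left_cancel₀ (pow_ne_zero _ h0) this

lemma caseB {D : Type*} [DivisionRing D] (p : ℕ) [Fact p.Prime] [Algebra (ZMod p) D]
    (a : D) (ha : IsIntegral (ZMod p) a) (hac : a ∉ Subring.center D)
    (h : ∀ x : D, x ≠ 0 → x⁻¹ * a * x - a ≠ 0 →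
      ∃ n : ℕ, 0 < n ∧ (x⁻¹ * a * x - a) ^ n = 1) : False := by
  have := finite_closure p a ha
  let _ : Field (Subring.closure {a}) := (Finite.isDomain_to_isField _).toField
  refine caseK (Subring.closure {a}).subtype ⟨a, Subring.subset_closure rfl⟩ ?_ hac h
  rw [eq_top_iff]
  rintro ⟨x, hx⟩ -
  induction hx using Subring.closure_induction with
  | mem x hx =>
    apply Subring.subset_closure
    exact Subtype.ext hx
  | zero => exact Subring.zero_mem _
  | one => exact Subring.one_mem _
  | add x z _ _ hx hz => exact Subring.add_mem _ hx hz
  | neg x _ hx => exact Subring.neg_mem _ hx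
  | mul x z _ _ hx hz => exact Subring.mul_mem _ hx hz

section
open LinearMap

lemma caseA {D : Type*} [DivisionRing D] (p : ℕ) [ExpChar D p] (a : D)
    (ha : a ∉ Subring.center D) (m : ℕ) (hm : a ^ (p ^ m) ∈ Subring.center D)
    (H : ∀ x y : D, x ≠ 0 → y ≠ 0 →
      ∃ r : ℕ, (1 - x * y * x⁻¹ * y⁻¹) ^ (p ^ r) ∈ Subring.center D) : False := by
  let δ : Module.End (Subring.center D) D := mulLeft (Subring.center D) a - mulRight (Subring.center D) a
  have hδ : ∀ x, δ x = a * x - x * a := fun _ => rfl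
  have hzero : ∀ x, (δ)^[p ^ m] x = 0 := by
    intro x
    rw [← Module.End.pow_apply,
      sub_pow_expChar_pow_of_commute p m (commute_mulLeft_right a a), LinearMap.sub_apply,
      pow_mulLeft, mulLeft_apply, pow_mulRight, mulRight_apply,
      Subring.mem_center_iff.1 hm x, sub_self]
  have ha0 : a ≠ 0 := fun nh => ha (nh ▸ Subring.zero_mem _)
  obtain ⟨b, hb⟩ : ∃ b : D, δ b ≠ 0 := by
    by_contra! hcon
    exact ha (Subring.mem_center_iff.2 fun g => (sub_eq_zero.1 (hcon g)).symm)
  obtain ⟨y, hy1, hy2⟩ : ∃ y, δ y ≠ 0 ∧ δ (δ y) = 0 := by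
    by_contra! hcon
    have : ∀ n, δ (δ^[n] b) ≠ 0 := by
      intro n
      induction n with
      | zero => exact hb
      | succ n ih => rw [Function.iterate_succ_apply']; exact hcon _ ih
    exact this (p ^ m) (by rw [hzero, map_zero])
  set c := δ y with hc
  have hcy : a * y - y * a = c := rfl
  have hac : a * c = c * a := sub_eq_zero.1 hy2
  have hac' : a * c⁻¹ = c⁻¹ * a := by
    rw [eq_inv_mul_iff_mul_eq₀ hy1, ← mul_assoc, ← hac, mul_assoc, mul_inv_cancel₀ hy1, mul_one]
  set d := c⁻¹ * a * y with hd
  have deq : a * d - d * a = a := by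
    have : a * d - d * a = a * c⁻¹ * (a * y - y * a) := by
      simp only [hd, mul_sub, ← mul_assoc, hac']
    rw [this, hcy, inv_mul_cancel_right₀ hy1]
  have hconj : a⁻¹ * d * a = d - 1 := by
    have : d * a = a * (d - 1) := by
      rw [mul_sub, mul_one]; nth_rw 3 [← deq]; abel
    rw [mul_assoc, this, inv_mul_cancel_left₀ ha0]
  have hd0 : d ≠ 0 := by
    intro h
    rw [h] at deq
    exact ha0 (by simpa using deq.symm)
  obtain ⟨r, hr⟩ := H a⁻¹ d (inv_ne_zero ha0) hd0
  rw [inv_inv, hconj, sub_mul, mul_inv_cancel₀ hd0, one_mul, sub_sub_cancel, inv_pow] at hr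
  have hr : d ^ p ^ r ∈ Subring.center D := by
    have := Set.inv_mem_center hr
    rwa [inv_inv] at this
  have h1 : (a⁻¹ * d * a) ^ (p ^ r) = d ^ p ^ r := by
    rw [GroupWithZero.conj_pow₀ ha0, mul_assoc, ← Subring.mem_center_iff.1 hr a,
      inv_mul_cancel_left₀ ha0]
  rw [hconj, sub_pow_expChar_pow_of_commute p r (Commute.one_right _), one_pow] at h1
  exact one_ne_zero (sub_eq_self.1 h1)
end

lemma exists_comm {D : Type*} [DivisionRing D] (x : D) (hx : x ∉ Subring.center D) :
    ∃ u v : D, u ≠ 0 ∧ v ≠ 0 ∧ u * v * u⁻¹ * v⁻¹ ∉ Subring.center D := by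
  by_contra! hcon
  have hx0 : x ≠ 0 := fun nh => hx (nh ▸ Subring.zero_mem _)
  have hx1 : x + 1 ≠ 0 := fun nh => hx (by
    rw [eq_neg_of_add_eq_zero_left nh]; exact Subring.neg_mem _ (Subring.one_mem _))
  obtain ⟨y, hy⟩ : ∃ y, y * x ≠ x * y := by
    by_contra! h; exact hx (Subring.mem_center_iff.2 h)
  have hy0 : y ≠ 0 := by rintro rfl; simp at hy
  have hU := hcon x y hx0 hy0
  have hV := hcon (x + 1) y hx1 hy0
  set U := x * y * x⁻¹ * y⁻¹ with hUd
  set V := (x + 1) * y * (x + 1)⁻¹ * y⁻¹ with hVd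
  have eU : U * y * x = x * y := by
    rw [hUd, inv_mul_cancel_right₀ hy0, inv_mul_cancel_right₀ hx0]
  have eV : V * y * (x + 1) = (x + 1) * y := by
    rw [hVd, inv_mul_cancel_right₀ hy0, inv_mul_cancel_right₀ hx1]
  have key : (V - U) * (y * x) = (1 - V) * y := by
    have : V * y * x + V * y = x * y + y := by simpa [mul_add, add_mul] using eV
    rw [sub_mul, sub_mul, ← mul_assoc, ← mul_assoc, eU, one_mul, sub_eq_sub_iff_add_eq_add, this]
    abel
  have hVU : V - U ≠ 0 := by
    intro h0
    rw [h0, zero_mul] at key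
    have hV1 : V = 1 := by
      rcases mul_eq_zero.1 key.symm with h | h
      · exact (sub_eq_zero.1 h).symm
      · exact absurd h hy0
    rw [hV1] at h0
    rw [← sub_eq_zero.1 h0, one_mul] at eU
    exact hy eU
  have h1 : V - U ∈ Subring.center D := Subring.sub_mem _ hV hU
  have h2 : 1 - V ∈ Subring.center D := Subring.sub_mem _ (Subring.one_mem _) hV
  apply hy
  apply mul_left_cancel₀ hVU
  rw [key, ← mul_assoc, ← Subring.mem_center_iff.1 h1 x]
  have h3 : y * ((V - U) * x) = y * (1 - V) := by
    rw [Subring.mem_center_iff.1 h2 y, ← key, ← mul_assoc, Subring.mem_center_iff.1 h1 y, mul_assoc]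
  have h4 := mul_left_cancel₀ hy0 h3
  rw [← h4, Subring.mem_center_iff.1 h1 x]

/-- Either `t` is purely inseparable over the centre, or there are two distinct conjugates. -/
lemma two_roots {D : Type*} [DivisionRing D] (p : ℕ) [ExpChar D p] (t : D)
    (hrad : ∀ a : Subring.center D, ∃ n : ℕ, 0 < n ∧ (t + a) ^ n ∈ Subring.center D)
    (ht : ¬ ∃ r : ℕ, t ^ (p ^ r) ∈ Subring.center D) :
    ∃ c c' : AlgebraicClosure (Subring.center D), c ≠ c' ∧ ∀ a : Subring.center D,
      ∃ n : ℕ, 0 < n ∧ (c + algebraMap _ _ a) ^ n = (c' + algebraMap _ _ a) ^ n := by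
  classical
  have hp : ExpChar (Subring.center D) p := ExpChar.expChar_center_iff.2 inferInstance
  have hint : IsIntegral (Subring.center D) t := by
    obtain ⟨n, hn, h⟩ := hrad 0
    refine ⟨X ^ n - C ⟨_, h⟩, monic_X_pow_sub_C _ hn.ne', ?_⟩
    rw [← aeval_def]
    simp only [map_sub, map_pow, aeval_X, aeval_C]
    rw [sub_eq_zero]
    change t ^ n = (t + ((0 : Subring.center D) : D)) ^ n
    simp
  have hirr := minpoly.irreducible hint
  have hmon := minpoly.monic hint
  have hne1 : (minpoly (Subring.center D) t).natSepDegree ≠ 1 := by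
    intro h
    obtain ⟨n, z, hz⟩ := (hmon.natSepDegree_eq_one_iff_of_irreducible p hirr).1 h
    have := minpoly.aeval (Subring.center D) t
    rw [hz] at this
    simp only [map_sub, map_pow, aeval_X, aeval_C] at this
    apply ht
    refine ⟨n, ?_⟩
    rw [sub_eq_zero.1 this]
    exact z.2
  have hne0 := natSepDegree_ne_zero _ hirr.natDegree_pos.ne'
  rw [natSepDegree_eq_of_isAlgClosed (AlgebraicClosure (Subring.center D))] at hne0 hne1
  obtain ⟨c, hc, c', hc', hcc⟩ := Finset.one_lt_card.1
    (Nat.lt_of_le_of_ne (Nat.one_le_iff_ne_zero.2 hne0) (Ne.symm hne1))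
  rw [Multiset.mem_toFinset, mem_aroots] at hc hc'
  refine ⟨c, c', hcc, fun a => ?_⟩
  obtain ⟨n, hn, h⟩ := hrad a
  have hdvd : minpoly (Subring.center D) t ∣ (X + C a) ^ n - C ⟨_, h⟩ := by
    apply minpoly.dvd
    simp only [map_sub, map_pow, map_add, aeval_X, aeval_C]
    exact sub_eq_zero.2 rfl
  have h1 := aeval_eq_zero_of_dvd_aeval_eq_zero hdvd hc.2
  have h2 := aeval_eq_zero_of_dvd_aeval_eq_zero hdvd hc'.2
  simp only [map_sub, map_pow, map_add, aeval_X, aeval_C] at h1 h2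
  exact ⟨n, hn, (sub_eq_zero.1 h1).trans (sub_eq_zero.1 h2).symm⟩

lemma alg_center {D : Type*} [DivisionRing D] (p : ℕ) [Fact p.Prime] [CharP D p]
    [Algebra (ZMod p) D] (c c' : AlgebraicClosure (Subring.center D)) (hcc : c ≠ c')
    (h : ∀ a : Subring.center D,
      ∃ n : ℕ, 0 < n ∧ (c + algebraMap _ _ a) ^ n = (c' + algebraMap _ _ a) ^ n)
    (a : D) (ha : a ∈ Subring.center D) : IsIntegral (ZMod p) a := by
  have hch : CharP (Subring.center D) p :=
    (Subring.center D).subtype.charP Subtype.val_injective p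
  let _ : Algebra (ZMod p) (Subring.center D) := ZMod.algebra _ p
  let i : (ZMod p) →+* AlgebraicClosure (Subring.center D) :=
    (algebraMap (Subring.center D) _).comp (algebraMap (ZMod p) (Subring.center D))
  obtain ⟨q, hq, hq0⟩ := (@alg_of_pow_eq (ZMod p) (AlgebraicClosure (Subring.center D)) _ _
    i.toAlgebra c c' hcc
    (Set.range (algebraMap (Subring.center D) _)) ⟨0, by simp⟩ ⟨1, by simp⟩
    (by rintro _ ⟨a, rfl⟩; exact h a)).2 _ ⟨⟨a, ha⟩, rfl⟩
  have : eval₂ i (algebraMap (Subring.center D) _ ⟨a, ha⟩) q = 0 := hq0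
  rw [← hom_eval₂, map_eq_zero] at this
  have h2 := congrArg (Subring.center D).subtype this
  rw [hom_eval₂, map_zero] at h2
  refine IsAlgebraic.isIntegral ⟨q, hq, ?_⟩
  rw [aeval_def, ← h2]
  congr 1
  exact Subsingleton.elim _ _

end RadT

open RadT Polynomial in
/-- If every element of `T(D)` is radical over the centre `F`, then `D = F`. -/
theorem stmt_15 (D : Type*) [DivisionRing D]
    (T : Submodule (Subring.center D) D)
    (hT : T = Submodule.span (Subring.center D)
      {z : D | ∃ x y : D, x ≠ 0 ∧ y ≠ 0 ∧ z = x * y * x⁻¹ * y⁻¹})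
    (hrad : ∀ t ∈ T, ∃ n : ℕ, 0 < n ∧ t ^ n ∈ Subring.center D) :
    ∀ x : D, x ∈ Subring.center D := by
  by_contra! hx
  obtain ⟨x, hx⟩ := hx
  obtain ⟨u, v, hu, hv, ha⟩ := exists_comm x hx
  have hcomm : ∀ x y : D, x ≠ 0 → y ≠ 0 → x * y * x⁻¹ * y⁻¹ ∈ T := by
    intro x y hx hy
    rw [hT]
    exact Submodule.subset_span ⟨x, y, hx, hy, rfl⟩
  have h1T : (1 : D) ∈ T := by simpa using hcomm 1 1 one_ne_zero one_ne_zero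
  have hFT : ∀ a : Subring.center D, (a : D) ∈ T := by
    intro a
    have := T.smul_mem a h1T
    rwa [show a • (1 : D) = a from mul_one _] at this
  obtain ⟨p, hp⟩ := ExpChar.exists D
  by_cases hA : ∀ t ∈ T, ∃ r : ℕ, t ^ (p ^ r) ∈ Subring.center D
  · obtain ⟨m, hm⟩ := hA _ (hcomm u v hu hv)
    exact caseA p _ ha m hm fun x y hx hy => hA _ (T.sub_mem h1T (hcomm x y hx hy))
  push Not at hA
  obtain ⟨t, ht, htr⟩ := hA
  obtain ⟨c, c', hcc, h⟩ := two_roots p t (fun a => hrad _ (T.add_mem ht (hFT a)))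
    (by push Not; exact htr)
  rcases hp with _ | hprime
  · have : CharZero (Subring.center D) :=
      ⟨fun a b hab => by
        have := congrArg Subtype.val hab
        exact_mod_cast this⟩
    have : CharZero (AlgebraicClosure (Subring.center D)) :=
      charZero_of_injective_algebraMap (algebraMap (Subring.center D) _).injective
    exact no_char_zero hcc fun a => by simpa using h a
  · have : Fact p.Prime := ⟨hprime⟩
    let _ : Algebra (ZMod p) D := ZMod.algebra D p
    have halg := alg_center p c c' hcc h
    have hfin : ∀ s ∈ T, s ≠ 0 → ∃ n : ℕ, 0 < n ∧ s ^ n = 1 := by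
      intro s hs hs0
      obtain ⟨n, hn, hsn⟩ := hrad s hs
      obtain ⟨m, hm, e⟩ := finite_order p _ (halg _ hsn) (pow_ne_zero _ hs0)
      exact ⟨n * m, Nat.mul_pos hn hm, by rw [pow_mul, e]⟩
    set a := u * v * u⁻¹ * v⁻¹ with had
    have haT : a ∈ T := hcomm u v hu hv
    have ha0 : a ≠ 0 := fun nh => ha (nh ▸ Subring.zero_mem _)
    have haint : IsIntegral (ZMod p) a := by
      obtain ⟨n, hn, e⟩ := hfin a haT ha0
      refine ⟨X ^ n - 1, monic_X_pow_sub_C 1 hn.ne', ?_⟩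
      rw [← aeval_def]
      simp [e]
    refine caseB p a haint ha fun x hx h0 => hfin _ (T.sub_mem ?_ haT) h0
    have : x⁻¹ * a * x = (x⁻¹ * u * x) * (x⁻¹ * v * x) * (x⁻¹ * u * x)⁻¹ * (x⁻¹ * v * x)⁻¹ := by
      rw [had]
      simp only [mul_inv_rev, inv_inv, mul_assoc, mul_inv_cancel_left₀ hx]
    rw [this]
    have hx' := inv_ne_zero hx
    exact hcomm _ _ (mul_ne_zero (mul_ne_zero hx' hu) hx) (mul_ne_zero (mul_ne_zero hx' hv) hx)
end
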